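/- Every set of 1717 points in the plane in general position contains 9 points in convex position; that is, g⁽²⁾(9) ≤ C(13,7)+1 = 1717. -/

import Mathlib

/-!
Suppose `S` contains no convex 9-gon. Fix a vertex `x` of the convex hull of `S` and sort the other
1716 points by angle about `x`. Under a projective map sending `x` to vertical infinity this becomes
the left-to-right order, so one may speak of cups (left turns) and caps (right turns). Only one fact
about orientations is needed: they form a *signotope* (`signotope_orient`), i.e. the signs of the
four triples of `a < b < c < d`, taken lexicographically, change at most once.

A convex 9-gon arises from a 9-cup, from an 8-cap together with `x`, and from an 8-cup together with
one point above the chord joining its ends (`lens_pairs`). Excluding the first two, the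
Erdős–Szekeres cup-cap bound (`erdos_szekeres`) allows exactly `C(13, 7) = 1716` points, so any
saving suffices. Let `X` be the set of left ends of 7-caps and `Y ⊆ X` the set of right ends of
7-cups inside `X`. Then

* the complement of `X` has no 9-cup and no 7-cap, hence at most `C(12, 7) = 792` points;
* `X \ Y` has no 7-cup and no 8-cap, hence at most `C(11, 5) = 462` points;
* `Y` has no 7-cap, by the usual extension argument, and no 7-cup, by `no_seven_cup`, where the third
  kind of 9-gon enters; hence at most `C(10, 5) = 252` points.

The total is 1506, a contradiction.
-/

/-- A finite set `S` of points in `ℝ^d` is in *general position* if every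
`(d+1)`-element subset of `S` is affinely independent. -/
def InGeneralPosition (d : ℕ) (S : Finset (Fin d → ℝ)) : Prop :=
  ∀ T ⊆ S, T.card = d + 1 → AffineIndependent ℝ ((↑) : T → (Fin d → ℝ))

/-- A finite set of points is in *convex position* if no point of the set lies in
the convex hull of the other points of the set. -/
def InConvexPosition (d : ℕ) (X : Finset (Fin d → ℝ)) : Prop :=
  ∀ p ∈ X, p ∉ convexHull ℝ (↑(X.erase p) : Set (Fin d → ℝ))

/-- A *k-hole* in `S` is a `k`-element subset `X ⊆ S` in convex position such that
no point of `S \ X` lies in the convex hull of `X`. -/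
def IsHole (d k : ℕ) (S X : Finset (Fin d → ℝ)) : Prop :=
  X ⊆ S ∧ X.card = k ∧ InConvexPosition d X ∧
    ∀ p ∈ S, p ∉ X → p ∉ convexHull ℝ (↑X : Set (Fin d → ℝ))

namespace CupCap
/-! ### Cups and caps in a signotope -/

section Abstract
variable {α : Type*} [LinearOrder α]

/-- `Chain T l`: the list `l` is strictly increasing and every three *consecutive* members satisfy
`T`. With `T` the relation that `a, b, c` turn upwards, this is a cup, with the negation of `T` a cap;
lists of at most two points are both. For a signotope `T` all triples of `l` then satisfy `T`
(`Chain.triplewise`). -/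
def Chain (T : α → α → α → Prop) : List α → Prop
  | [] => True
  | [_] => True
  | [a, b] => a < b
  | a :: b :: c :: l => a < b ∧ T a b c ∧ Chain T (b :: c :: l)

/-- Among the signs of `abc`, `abd`, `acd`, `bcd`, for `a < b < c < d` and in this order, at most
one change occurs. Equivalently, in each of the four three-term subsequences the middle sign agrees
with the outer two whenever these are equal: `pos` says so for the sign `T`, `neg` for `¬T`. -/
structure Signotope (T : α → α → α → Prop) : Prop where
  pos : ∀ a b c d, a < b → b < c → c < d →
    (T a b c → T a c d → T a b d) ∧ (T a b c → T b c d → T a b d) ∧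
    (T a b c → T b c d → T a c d) ∧ (T a b d → T b c d → T a c d)
  neg : ∀ a b c d, a < b → b < c → c < d →
    (¬T a b c → ¬T a c d → ¬T a b d) ∧ (¬T a b c → ¬T b c d → ¬T a b d) ∧
    (¬T a b c → ¬T b c d → ¬T a c d) ∧ (¬T a b d → ¬T b c d → ¬T a c d)

theorem Signotope.compl {T : α → α → α → Prop} (h : Signotope T) :
    Signotope (fun a b c => ¬T a b c) :=
  ⟨h.neg, by simpa only [not_not] using h.pos⟩

variable {T : α → α → α → Prop}

theorem Chain.tail {a : α} {l : List α} (h : Chain T (a :: l)) : Chain T l := by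
  match l, h with
  | [], _ => trivial
  | [_], _ => trivial
  | _ :: _ :: _, h => exact h.2.2

theorem Chain.lt {a b : α} {l : List α} (h : Chain T (a :: b :: l)) : a < b := by
  match l, h with
  | [], h => exact h
  | _ :: _, h => exact h.1

theorem Chain.pairwise : ∀ {l : List α}, Chain T l → l.Pairwise (· < ·)
  | [], _ => List.Pairwise.nil
  | [_], _ => List.pairwise_singleton _ _
  | a :: b :: l, h => by
    have ih := Chain.pairwise h.tail
    refine List.pairwise_cons.2 ⟨fun x hx => ?_, ih⟩
    rcases List.mem_cons.1 hx with rfl | hx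
    · exact h.lt
    · exact h.lt.trans ((List.pairwise_cons.1 ih).1 x hx)

/-- Two chains overlapping in an edge `a, b` can be concatenated; no condition on `T` is needed
because `Chain` only looks at consecutive triples. -/
theorem Chain.glue {a b : α} {r : List α} : ∀ {l : List α},
    Chain T (l ++ [a, b]) → Chain T (a :: b :: r) → Chain T (l ++ a :: b :: r)
  | [], _, h => h
  | [_], h, h' => ⟨h.1, h.2.1, h'⟩
  | [_, y], h, h' => ⟨h.1, h.2.1, Chain.glue (l := [y]) h.2.2 h'⟩
  | _ :: y :: z :: l, h, h' => ⟨h.1, h.2.1, Chain.glue (l := y :: z :: l) h.2.2 h'⟩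

theorem Chain.snoc {a b c : α} {l : List α} (h : Chain T (l ++ [a, b])) (hbc : b < c)
    (hT : T a b c) : Chain T (l ++ [a, b, c]) := by
  refine Chain.glue h ⟨?_, hT, hbc⟩
  have := h.pairwise
  simp [List.pairwise_append] at this
  exact this.2.1

theorem Chain.triplewise (hs : Signotope T) : ∀ {l : List α}, Chain T l → l.Triplewise T
  | [], _ => by simp
  | [_], _ => by simp
  | [_, _], _ => by simp
  | a :: b :: c :: l, h => by
    have ih := Chain.triplewise hs h.2.2
    have hp := h.2.2.pairwise
    refine List.triplewise_cons.2 ⟨?_, ih⟩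
    rw [List.triplewise_cons] at ih
    rw [List.pairwise_cons] at hp
    have key : ∀ x ∈ c :: l, T a b x := by
      intro x hx
      rcases List.mem_cons.1 hx with rfl | hx'
      · exact h.2.1
      · exact (hs.pos a b c x h.1 (hp.1 c (by simp)) ((List.pairwise_cons.1 hp.2).1 x hx')).2.1
          h.2.1 ((List.pairwise_cons.1 ih.1).1 x hx')
    refine List.pairwise_cons.2 ⟨key, ?_⟩
    refine ((ih.1.and hp.2).imp_of_mem ?_)
    intro x y hx hy hxy
    exact (hs.pos a b x y h.1 (hp.1 x hx) hxy.2).2.2.1 (key x hx) hxy.1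

/-- If a point `t` lies above the chord `az` of a cup from `a` to `z`, then running through the cup
from left to right and back through `t` is a convex polygon: each pair `x < y` of the cup forms a
counterclockwise triangle with `t`, spelled out according to the position of `t` in the order. -/
theorem lens_pairs (hs : Signotope T) {a z t : α} {L : List α} (hL : Chain T (a :: (L ++ [z])))
    (hat : a < t) (htz : t < z) (h : ¬T a t z) :
    (a :: (L ++ [z])).Pairwise fun x y =>
      (y < t ∧ T x y t) ∨ (x < t ∧ t < y ∧ ¬T x t y) ∨ (t < x ∧ T t x y) := by
  have ht := hL.triplewise hs
  have hp := hL.pairwise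
  have haz : a < z := hat.trans htz
  have hne : ∀ x ∈ L, a < x ∧ x < z ∧ T a x z := by
    rw [List.triplewise_cons] at ht
    simp only [List.pairwise_append, List.pairwise_cons, List.mem_append, List.mem_singleton] at ht hp
    grind
  have hleft : (a :: (L ++ [z])).Pairwise fun x y => x = a ∨ T a x y := by
    rw [List.triplewise_cons] at ht
    exact List.pairwise_cons.2 ⟨fun _ _ => Or.inl rfl, ht.1.imp Or.inr⟩
  have hright : (a :: (L ++ [z])).Pairwise fun x y => y = z ∨ T x y z := by
    rw [← List.cons_append, List.triplewise_append] at ht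
    rw [← List.cons_append, List.pairwise_append]
    exact ⟨(ht.2.2.2 z (by simp)).imp Or.inr, by simp, by simp⟩
  refine ((hp.and (hleft.and hright)).imp_of_mem ?_)
  rintro x y hx hy ⟨hxy, hl, hr⟩
  have hx' : x = a ∨ x = z ∨ (a < x ∧ x < z ∧ T a x z) := by
    simp only [List.mem_cons, List.mem_append, List.not_mem_nil, or_false] at hx; grind
  have hy' : y = a ∨ y = z ∨ (a < y ∧ y < z ∧ T a y z) := by
    simp only [List.mem_cons, List.mem_append, List.not_mem_nil, or_false] at hy; grind
  have hxz : x < z := by grind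
  have hay : a < y := by grind
  have htx : t ≠ x := by rintro rfl; grind
  have hty : t ≠ y := by rintro rfl; grind
  rcases lt_or_gt_of_ne hty with hty | hty
  · rcases lt_or_gt_of_ne htx with htx | htx
    · have hax := hat.trans htx
      have h1 : T a x z := by grind
      have h2 : T a x y := by grind
      have h3 : ¬T a t x := fun h' => h ((hs.pos a t x z hat htx hxz).1 h' h1)
      refine Or.inr (Or.inr ⟨htx, ?_⟩)
      by_contra h4
      exact (hs.neg a t x y hat htx hxy).2.2.1 h3 h4 h2
    · refine Or.inr (Or.inl ⟨htx, hty, ?_⟩)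
      have h1 : ¬T x t z := by
        rcases hx' with rfl | rfl | ⟨hax, _, h1⟩
        · exact h
        · exact absurd hxz (lt_irrefl _)
        · exact fun h' => h ((hs.pos a x t z hax htx htz).2.2.2 h1 h')
      rcases eq_or_ne y z with rfl | hyz
      · exact h1
      · have hyz' : y < z := by
          rcases hy' with rfl | h2 | h2
          · exact absurd hay (lt_irrefl _)
          · exact absurd h2 hyz
          · exact h2.2.1
        have hr := hr.resolve_left hyz
        exact fun h' => h1 ((hs.pos x t y z htx hty hyz').1 h' hr)
  · refine Or.inl ⟨hty, ?_⟩
    have hyz := hty.trans htz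
    have h1 : T a y z := by grind
    have h2 : T a y t := by
      by_contra h'
      exact (hs.neg a y t z hay hty htz).1 h' h h1
    rcases hx' with rfl | rfl | ⟨hax, _, _⟩
    · exact h2
    · exact absurd hxz (lt_irrefl _)
    · have h3 : ¬T y t z := fun h' => h ((hs.pos a y t z hay hty htz).2.2.2 h1 h')
      have h4 : T x y z := by grind
      by_contra h'
      exact (hs.neg x y t z hxy hty htz).2.1 h' h3 h4

/-- The Erdős–Szekeres bound: a set with neither a `(k + 2)`-cup nor an `(l + 2)`-cap has at most
`(k + l).choose k` points. The set is split into the right ends of `(k + 1)`-cups, among which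
caps are one shorter, and the rest. Nothing is assumed about `T`. -/
theorem erdos_szekeres (T : α → α → α → Prop) : ∀ (m k l : ℕ) (_ : k + l = m) (Q : Finset α),
    (∀ L : List α, Chain T L → (∀ x ∈ L, x ∈ Q) → L.length ≠ k + 2) →
    (∀ L : List α, Chain (fun a b c => ¬T a b c) L → (∀ x ∈ L, x ∈ Q) → L.length ≠ l + 2) →
    Q.card ≤ (k + l).choose k := by
  classical
  intro m
  induction m with
  | zero => 
    intro k l hkl Q h1 _
    obtain ⟨rfl, rfl⟩ : k = 0 ∧ l = 0 := by omega
    refine le_of_not_gt fun hc => ?_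
    obtain ⟨a, ha, b, hb, hab⟩ := Finset.one_lt_card.1 (by simpa using hc)
    rcases lt_or_gt_of_ne hab with h | h
    · exact h1 [a, b] h (by simp [ha, hb]) rfl
    · exact h1 [b, a] h (by simp [ha, hb]) rfl
  | succ m ih =>
    intro k l hkl Q h1 h2
    rcases Nat.eq_zero_or_pos k with rfl | hk
    · refine le_of_not_gt fun hc => ?_
      obtain ⟨a, ha, b, hb, hab⟩ := Finset.one_lt_card.1 (by simpa using hc)
      rcases lt_or_gt_of_ne hab with h | h
      · exact h1 [a, b] h (by simp [ha, hb]) rfl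
      · exact h1 [b, a] h (by simp [ha, hb]) rfl
    rcases Nat.eq_zero_or_pos l with rfl | hl
    · refine le_of_not_gt fun hc => ?_
      obtain ⟨a, ha, b, hb, hab⟩ := Finset.one_lt_card.1 (by simpa using hc)
      rcases lt_or_gt_of_ne hab with h | h
      · exact h2 [a, b] h (by simp [ha, hb]) rfl
      · exact h2 [b, a] h (by simp [ha, hb]) rfl
    obtain ⟨k, rfl⟩ : ∃ k', k = k' + 1 := ⟨k - 1, by omega⟩
    obtain ⟨l, rfl⟩ : ∃ l', l = l' + 1 := ⟨l - 1, by omega⟩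
    set P : α → Prop := fun x => ∃ L : List α, Chain T (L ++ [x]) ∧ (∀ y ∈ L ++ [x], y ∈ Q) ∧
      L.length = k + 1 with hP
    have hA : (Q.filter P).card ≤ (k + 1 + l).choose (k + 1) := by
      refine ih (k + 1) l (by omega) _
        (fun L hL hLQ => h1 L hL fun x hx => (Finset.mem_filter.1 (hLQ x hx)).1) ?_
      intro L hL hLQ hlen
      match L, hlen with
      | w₁ :: w₂ :: W, hlen =>
        obtain ⟨C, hC, hCQ, hClen⟩ := (Finset.mem_filter.1 (hLQ w₁ (by simp))).2
        rcases List.eq_nil_or_concat C with rfl | ⟨C, p, rfl⟩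
        · simp at hClen
        have hLQ' : ∀ x ∈ w₁ :: w₂ :: W, x ∈ Q := fun x hx => (Finset.mem_filter.1 (hLQ x hx)).1
        simp only [List.concat_eq_append, List.append_assoc, List.cons_append, List.nil_append,
          List.length_append, List.length_cons, List.length_nil] at hC hCQ hClen hlen
        by_cases hT : T p w₁ w₂
        · refine h1 _ (hC.snoc hL.lt hT) ?_ (by simp; omega)
          intro x hx
          simp only [List.mem_append, List.mem_cons, List.not_mem_nil, or_false] at hx hCQ hLQ'
          grind
        · have hpw : p < w₁ := by
            have := hC.pairwise
            simp [List.pairwise_append] at this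
            exact this.2.1
          refine h2 (p :: w₁ :: w₂ :: W) ⟨hpw, hT, hL⟩ ?_ (by simp; omega)
          intro x hx
          simp only [List.mem_append, List.mem_cons, List.not_mem_nil, or_false] at hx hCQ hLQ'
          grind
    have hB : (Q.filter fun x => ¬P x).card ≤ (k + (l + 1)).choose k := by
      refine ih k (l + 1) (by omega) _ ?_
        (fun L hL hLQ => h2 L hL fun x hx => (Finset.mem_filter.1 (hLQ x hx)).1)
      intro L hL hLQ hlen
      rcases List.eq_nil_or_concat L with rfl | ⟨L, x, rfl⟩
      · simp at hlen
      rw [List.concat_eq_append] at hL hLQ hlen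
      refine (Finset.mem_filter.1 (hLQ x (by simp))).2 ⟨L, hL, fun y hy =>
        (Finset.mem_filter.1 (hLQ y hy)).1, by simpa using hlen⟩
    have := Finset.card_filter_add_card_filter_not (s := Q) P
    have hc : (k + 1 + (l + 1)).choose (k + 1)
        = (k + (l + 1)).choose k + (k + 1 + l).choose (k + 1) := by
      rw [show k + 1 + (l + 1) = (k + (l + 1)) + 1 by ring, Nat.choose_succ_succ,
        show k + (l + 1) = k + 1 + l by ring]
    omega

/-- Assume there are no 9-cups, no 8-caps, and no point above the chord of an 8-cup. Then a 7-cup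
`b₁, …, b₆, b₇` cannot have all of the following: `b₁` and `b₆` are right ends of 7-cups
(`C, p, b₁` and `S, q, b₆`), while `b₁` and `b₇` are left ends of 7-caps (`b₁, w₂, w₃, W` and
`b₇, y₂, Y`). The proof compares the positions of `w₂` and `y₂`. -/
theorem no_seven_cup (hs : Signotope T)
    (hcup : ∀ L : List α, Chain T L → L.length ≠ 9)
    (hcap : ∀ L : List α, Chain (fun a b c => ¬T a b c) L → L.length ≠ 8)
    (hlens : ∀ (a : α) (L : List α) (z t : α), Chain T (a :: (L ++ [z])) → L.length = 6 →
      a < t → t < z → T a t z)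
    {b₁ b₆ b₇ p q w₂ w₃ y₂ : α} {B C S W Y : List α}
    (hB : Chain T (b₁ :: (B ++ [b₆, b₇]))) (lB : B.length = 4)
    (hC : Chain T (C ++ [p, b₁])) (lC : C.length = 5)
    (hS : Chain T (S ++ [q, b₆])) (lS : S.length = 5)
    (hW : Chain (fun a b c => ¬T a b c) (b₁ :: w₂ :: w₃ :: W)) (lW : W.length = 4)
    (hY : Chain (fun a b c => ¬T a b c) (b₇ :: y₂ :: Y)) (lY : Y.length = 5) : False := by
  have hpb : p < b₁ := by
    have := hC.pairwise
    simp [List.pairwise_append] at this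
    exact this.2.1
  have hqb : q < b₆ := by
    have := hS.pairwise
    simp [List.pairwise_append] at this
    exact this.2.1
  have hb17 : b₁ < b₇ ∧ b₁ < b₆ ∧ b₆ < b₇ := by
    have := hB.pairwise
    simp [List.pairwise_append] at this
    grind
  obtain ⟨hb17, hb16, hb67⟩ := hb17
  have hbw := hW.lt
  have hww := hW.tail.lt
  have hby := hY.lt
  have h1 : T p b₁ w₂ := by
    by_contra h
    exact hcap (p :: b₁ :: w₂ :: w₃ :: W) ⟨hpb, h, hW⟩ (by simp [lW])
  have h2 : T b₆ b₇ y₂ := by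
    by_contra h
    exact hcap (b₆ :: b₇ :: y₂ :: Y) ⟨hb67, h, hY⟩ (by simp [lY])
  have hBy : Chain T (b₁ :: (B ++ [b₆, b₇, y₂])) := Chain.snoc (l := b₁ :: B) hB hby h2
  have h3 : T b₁ b₇ y₂ := by
    have := hBy.triplewise hs
    rw [List.triplewise_cons] at this
    have := this.1
    simp [List.pairwise_append] at this
    grind
  have h4 : ¬T p b₁ b₇ := fun h =>
    hcup _ (hC.glue (r := [b₇, y₂]) ⟨hpb, h, hb17, h3, hby⟩) (by simp [lC])
  -- So `C, p, b₁, w₂` and `b₁, B, b₆, b₇, y₂` are 8-cups, and `b₁w₂` is steeper than `b₁b₇`.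
  rcases lt_trichotomy w₂ y₂ with hwy | rfl | hyw
  · have h5 : T b₁ w₂ y₂ := hlens b₁ (B ++ [b₆, b₇]) y₂ w₂ (by simpa using hBy) (by simp [lB]) hbw hwy
    exact hcup _ (hC.glue (r := [w₂, y₂]) ⟨hpb, h1, hbw, h5, hwy⟩) (by simp [lC])
  · have h5 : ¬T q b₆ b₇ := fun h =>
      hcup _ (hS.glue (r := [b₇, w₂]) ⟨hqb, h, hb67, h2, hby⟩) (by simp [lS])
    have hw3 : ¬T b₁ w₂ w₃ := hW.2.1
    have h6 : ¬T b₆ b₇ w₃ := fun h => hw3 <|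
      hlens b₁ (B ++ [b₆, b₇]) w₃ w₂
        (by simpa using Chain.snoc (l := b₁ :: B) hB (hby.trans hww) h) (by simp [lB]) hbw hww
    -- `b₁` may be replaced by `b₇` in the cap `b₁, w₂, w₃, W`; dropping `w₂` from the result leaves
    -- room for `q` and `b₆` in front, which gives an 8-cap.
    have h7 : ¬T b₇ w₂ w₃ := fun h =>
      hw3 ((hs.pos b₁ b₇ w₂ w₃ hb17 hby hww).2.2.1 h3 h)
    have h8 : Chain (fun a b c => ¬T a b c) (b₇ :: w₂ :: w₃ :: W) := ⟨hby, h7, hW.tail⟩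
    match W, lW, h8 with
    | w₄ :: W, lW, h8 =>
      have h9 : ¬T b₇ w₃ w₄ := by
        have := h8.triplewise hs.compl
        simp [List.triplewise_cons] at this
        grind
      exact hcap (q :: b₆ :: b₇ :: w₃ :: w₄ :: W)
        ⟨hqb, h5, hb67, h6, hby.trans hww, h9, h8.tail.tail⟩ (by simpa using lW)
  · have h5 : ¬T b₇ y₂ w₂ := fun h => hcup (b₁ :: (B ++ [b₆, b₇, y₂, w₂]))
      (by simpa using Chain.snoc (l := b₁ :: (B ++ [b₆])) (by simpa using hBy) hyw h) (by simp [lB])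
    have hw3 : ¬T b₁ w₂ w₃ := hW.2.1
    have hb1y := hb17.trans hby
    -- If `p, b₁, y₂` is a cup, `y₂` lies above the chord `b₁w₂`, so `b₆, b₇, w₂` is a cap, and either
    -- it extends to an 8-cap or `b₇` lies above `b₁w₂`. Otherwise `y₂, w₂, w₃, W` is a 7-cap, which
    -- `b₇` extends.
    by_cases h6 : T p b₁ y₂
    · have h7 : ¬T b₁ y₂ w₂ := fun h =>
        hcup _ (hC.glue (r := [y₂, w₂]) ⟨hpb, h6, hb1y, h, hyw⟩) (by simp [lC])
      have h8 : ¬T b₆ b₇ w₂ := fun h => h7 <|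
        hlens b₁ (B ++ [b₆, b₇]) w₂ y₂
          (by simpa using Chain.snoc (l := b₁ :: B) hB (hby.trans hyw) h) (by simp [lB]) hb1y hyw
      have h9 : T b₇ w₂ w₃ := by
        by_contra h
        exact hcap (b₆ :: b₇ :: w₂ :: w₃ :: W)
          ⟨hb67, h8, hby.trans hyw, h, hW.tail⟩ (by simp [lW])
      have h10 : T b₁ b₇ w₂ := by
        by_contra h
        exact (hs.neg p b₁ b₇ w₂ hpb hb17 (hby.trans hyw)).2.1 h4 h h1
      exact hw3 ((hs.pos b₁ b₇ w₂ w₃ hb17 (hby.trans hyw) hww).2.2.1 h10 h9)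
    · have h7 : T b₁ y₂ w₂ := by
        by_contra h
        exact (hs.neg p b₁ y₂ w₂ hpb hb1y hyw).2.1 h6 h h1
      have h8 : ¬T y₂ w₂ w₃ := fun h => hw3 ((hs.pos b₁ y₂ w₂ w₃ hb1y hyw hww).2.2.1 h7 h)
      exact hcap (b₇ :: y₂ :: w₂ :: w₃ :: W) ⟨hby, h5, hyw, h8, hW.tail⟩ (by simp [lW])

/-- `1506 = 792 + 462 + 252`: the points that are not left ends of 7-caps; among the set `X` of
remaining ones, those that are not right ends of 7-cups inside `X`; and the rest, which contains no
7-cap, and by `no_seven_cup` no 7-cup. -/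
theorem card_le [Fintype α] (hs : Signotope T)
    (hcup : ∀ L : List α, Chain T L → L.length ≠ 9)
    (hcap : ∀ L : List α, Chain (fun a b c => ¬T a b c) L → L.length ≠ 8)
    (hlens : ∀ (a : α) (L : List α) (z t : α), Chain T (a :: (L ++ [z])) → L.length = 6 →
      a < t → t < z → T a t z) : Fintype.card α ≤ 1506 := by
  classical
  set P : α → Prop := fun x => ∃ L : List α, Chain (fun a b c => ¬T a b c) (x :: L) ∧
    L.length = 6 with hP
  set X : Finset α := Finset.univ.filter P with hX
  set R : α → Prop := fun x => ∃ L : List α, Chain T (L ++ [x]) ∧ (∀ y ∈ L ++ [x], y ∈ X) ∧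
    L.length = 6 with hR
  have e1 : (Finset.univ.filter fun x => ¬P x).card ≤ 792 := by
    refine erdos_szekeres T _ 7 5 rfl _ (fun L hL _ => hcup L hL) ?_
    intro L hL hLQ hlen
    match L, hlen with
    | x :: L, hlen =>
      exact (Finset.mem_filter.1 (hLQ x (by simp))).2 ⟨L, hL, by simpa using hlen⟩
  have e2 : (X.filter fun x => ¬R x).card ≤ 462 := by
    refine erdos_szekeres T _ 5 6 rfl _ ?_ (fun L hL _ => hcap L hL)
    intro L hL hLQ hlen
    rcases List.eq_nil_or_concat L with rfl | ⟨L, x, rfl⟩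
    · simp at hlen
    rw [List.concat_eq_append] at hL hLQ hlen
    exact (Finset.mem_filter.1 (hLQ x (by simp))).2 ⟨L, hL, fun y hy =>
      (Finset.mem_filter.1 (hLQ y hy)).1, by simpa using hlen⟩
  have hPX : ∀ x ∈ X, ∃ u v W, Chain (fun a b c => ¬T a b c) (x :: u :: v :: W) ∧ W.length = 4 := by
    intro x hx
    obtain ⟨L, hL, hlen⟩ := (Finset.mem_filter.1 hx).2
    match L, hlen with
    | u :: v :: W, hlen => exact ⟨u, v, W, hL, by simpa using hlen⟩
  have hRX : ∀ x, R x → ∃ C p, Chain T (C ++ [p, x]) ∧ C.length = 5 := by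
    rintro x ⟨L, hL, -, hlen⟩
    rcases List.eq_nil_or_concat L with rfl | ⟨C, p, rfl⟩
    · simp at hlen
    exact ⟨C, p, by simpa using hL, by simpa using hlen⟩
  have e3 : (X.filter R).card ≤ 252 := by
    refine erdos_szekeres T _ 5 5 rfl _ ?_ ?_
    · intro L hL hLQ hlen
      match L, hlen with
      | [b₁, b₂, b₃, b₄, b₅, b₆, b₇], _ =>
        have hY : ∀ x ∈ [b₁, b₂, b₃, b₄, b₅, b₆, b₇], x ∈ X ∧ R x :=
          fun x hx => Finset.mem_filter.1 (hLQ x hx)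
        obtain ⟨w₂, w₃, W, hW, lW⟩ := hPX b₁ (hY b₁ (by simp)).1
        obtain ⟨y₂, y₃, Y, hY', lY⟩ := hPX b₇ (hY b₇ (by simp)).1
        obtain ⟨C, p, hC, lC⟩ := hRX b₁ (hY b₁ (by simp)).2
        obtain ⟨S, q, hS, lS⟩ := hRX b₆ (hY b₆ (by simp)).2
        exact no_seven_cup hs hcup hcap hlens (B := [b₂, b₃, b₄, b₅]) hL rfl hC lC hS lS hW lW hY'
          (by simp [lY])
    · intro L hL hLQ hlen
      match L, hlen with
      | w₁ :: w₂ :: W, hlen =>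
        obtain ⟨C, p, hC, lC⟩ := hRX w₁ (Finset.mem_filter.1 (hLQ w₁ (by simp))).2
        obtain ⟨u, v, U, hU, lU⟩ := hPX w₂ (Finset.mem_filter.1 (hLQ w₂ (by simp))).1
        have hpw : p < w₁ := by
          have := hC.pairwise
          simp [List.pairwise_append] at this
          exact this.2.1
        by_cases hT : T p w₁ w₂
        · by_cases hT' : T w₁ w₂ u
          · exact hcup _ (hC.glue (r := [w₂, u]) ⟨hpw, hT, hL.lt, hT', hU.lt⟩) (by simp [lC])
          · exact hcap (w₁ :: w₂ :: u :: v :: U) ⟨hL.lt, hT', hU⟩ (by simp [lU])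
        · exact hcap (p :: w₁ :: w₂ :: W) ⟨hpw, hT, hL⟩ (by simpa using hlen)
  have s1 := Finset.card_filter_add_card_filter_not (s := (Finset.univ : Finset α)) P
  have s2 := Finset.card_filter_add_card_filter_not (s := X) R
  rw [← hX, Finset.card_univ] at s1
  omega
end Abstract
/-! ### Orientations and convex position in the plane -/

section Plane

/-- Twice the signed area of the triangle `abc`; positive when it is counterclockwise. -/
def orient (a b c : Fin 2 → ℝ) : ℝ :=
  (b 0 - a 0) * (c 1 - a 1) - (b 1 - a 1) * (c 0 - a 0)

theorem orient_rot (a b c : Fin 2 → ℝ) : orient b c a = orient a b c := by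
  unfold orient; ring

theorem orient_swap (a b c : Fin 2 → ℝ) : orient c b a = -orient a b c := by
  unfold orient; ring

theorem orient_ne_zero {S : Finset (Fin 2 → ℝ)} (hgp : InGeneralPosition 2 S)
    {a b c : Fin 2 → ℝ} (ha : a ∈ S) (hb : b ∈ S) (hc : c ∈ S)
    (hab : a ≠ b) (hac : a ≠ c) (hbc : b ≠ c) : orient a b c ≠ 0 := by
  classical
  intro h0
  have hind := hgp {a, b, c} (by simp [Finset.insert_subset_iff, ha, hb, hc])
    (Finset.card_eq_three.2 ⟨a, b, c, hab, hac, hbc, rfl⟩)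
  have h3 : AffineIndependent ℝ ![a, b, c] := by
    let e : Fin 3 ↪ ({a, b, c} : Finset (Fin 2 → ℝ)) :=
      ⟨![⟨a, by simp⟩, ⟨b, by simp⟩, ⟨c, by simp⟩], by
        intro i j
        fin_cases i <;> fin_cases j <;> simp [hab, hac, hbc, hab.symm, hac.symm, hbc.symm]⟩
    convert hind.comp_embedding e using 1
    ext i
    fin_cases i <;> rfl
  rw [affineIndependent_iff_not_collinear_set] at h3
  refine h3 ((collinear_iff_of_mem (p₀ := a) (by simp)).2 ⟨b - a, ?_⟩)
  have hr : ∃ r : ℝ, c = r • (b - a) +ᵥ a := by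
    unfold orient at h0
    by_cases hx : b 0 - a 0 = 0
    · have hy : b 1 - a 1 ≠ 0 := fun hy => hab (by
        ext i; fin_cases i <;> simp <;> linarith)
      refine ⟨(c 1 - a 1) / (b 1 - a 1), ?_⟩
      have : c 0 - a 0 = 0 := by
        rw [hx] at h0
        have : (b 1 - a 1) * (c 0 - a 0) = 0 := by linarith
        exact (mul_eq_zero.1 this).resolve_left hy
      ext i
      fin_cases i
      · simp [hx]; linarith
      · simp; field_simp; ring
    · refine ⟨(c 0 - a 0) / (b 0 - a 0), ?_⟩
      ext i
      fin_cases i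
      · simp; field_simp; ring
      · simp; field_simp; linarith
  intro p hp
  rcases hp with rfl | rfl | rfl
  · exact ⟨0, by simp⟩
  · exact ⟨1, by simp⟩
  · exact hr

/-- The sum of the affine functionals of the two edge lines at `p` vanishes at `p` and is positive
at every other vertex. -/
theorem vertex_notMem_hull {p a z : Fin 2 → ℝ} {M : List (Fin 2 → ℝ)}
    (h : (p :: a :: (M ++ [z])).Triplewise fun x y w => 0 < orient x y w) :
    p ∉ convexHull ℝ {v | v ∈ a :: (M ++ [z])} := by
  have hpair := (List.triplewise_cons.1 h).1
  have hconv : Convex ℝ {v : Fin 2 → ℝ | 0 < orient p a v + orient z p v} := by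
    intro u hu v hv s t hs ht hst
    simp only [Set.mem_ofPred_eq] at hu hv ⊢
    have : orient p a (s • u + t • v) + orient z p (s • u + t • v)
        = s * (orient p a u + orient z p u) + t * (orient p a v + orient z p v) := by
      obtain rfl : s = 1 - t := by linarith
      simp only [orient, Pi.add_apply, Pi.smul_apply, smul_eq_mul]; ring
    rw [this]
    rcases hs.eq_or_lt with rfl | hs
    · obtain rfl : t = 1 := by linarith
      simpa using hv
    · have := mul_pos hs hu
      have := mul_nonneg ht hv.le
      linarith
  intro hp
  have hmem := convexHull_min (t := {v : Fin 2 → ℝ | 0 < orient p a v + orient z p v}) ?_ hconv hp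
  · simp only [Set.mem_ofPred_eq, orient] at hmem
    ring_nf at hmem
    exact lt_irrefl _ hmem
  · intro v hv
    simp only [List.pairwise_cons, List.pairwise_append, List.mem_append,
      Set.mem_ofPred_eq, List.mem_cons, List.not_mem_nil, or_false, forall_eq] at hpair hv ⊢
    have e1 : orient p a a = 0 := by unfold orient; ring
    have e2 : orient z p z = 0 := by unfold orient; ring
    rcases hv with rfl | hv | rfl
    · rw [e1, orient_rot p v z |>.symm.trans (orient_rot v z p).symm |>.symm]
      linarith [hpair.1 z (Or.inr rfl)]
    · have h1 := hpair.1 v (Or.inl hv)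
      have h2 := hpair.2.2.2 v hv
      rw [← orient_rot, ← orient_rot] at h2
      linarith
    · rw [e2]; linarith [hpair.1 v (Or.inr rfl)]

theorem triplewise_rotate {l₁ l₂ : List (Fin 2 → ℝ)}
    (h : (l₁ ++ l₂).Triplewise fun x y w => 0 < orient x y w) :
    (l₂ ++ l₁).Triplewise fun x y w => 0 < orient x y w := by
  rw [List.triplewise_append] at h ⊢
  refine ⟨h.2.1, h.1, ?_, ?_⟩
  · exact fun a ha => (h.2.2.2 a ha).imp fun hxy => by rwa [orient_rot] at hxy
  · exact fun a ha => (h.2.2.1 a ha).imp fun hxy => by rwa [← orient_rot] at hxy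

/-- A polygon listed so that all triples are counterclockwise is in convex position. -/
theorem convexPosition_of_triplewise {L : List (Fin 2 → ℝ)} (hlen : 3 ≤ L.length)
    (hnd : L.Nodup) (h : L.Triplewise fun x y w => 0 < orient x y w) :
    InConvexPosition 2 L.toFinset := by
  intro p hp
  obtain ⟨l₁, l₂, rfl⟩ := List.append_of_mem (List.mem_toFinset.1 hp)
  have h' := triplewise_rotate h
  rw [List.cons_append] at h'
  have hM : ∃ a M z, l₂ ++ l₁ = a :: (M ++ [z]) := by
    have hl : 2 ≤ (l₂ ++ l₁).length := by
      simp only [List.length_append, List.length_cons] at hlen ⊢; omega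
    match l₂ ++ l₁, hl with
    | a :: N, hl =>
      rcases List.eq_nil_or_concat N with rfl | ⟨M, z, rfl⟩
      · simp at hl
      · exact ⟨a, M, z, by simp⟩
  obtain ⟨a, M, z, hM⟩ := hM
  rw [hM] at h'
  convert vertex_notMem_hull h' using 3
  ext v
  rw [Set.mem_ofPred_eq, ← hM]
  have : p ∉ l₂ ++ l₁ := by
    rw [List.nodup_append, List.nodup_cons] at hnd
    simp only [List.mem_append]
    grind
  simp only [Finset.coe_erase, List.coe_toFinset, Set.mem_sdiff, Set.mem_ofPred_eq, List.mem_append,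
    List.mem_cons, Set.mem_singleton_iff] at this ⊢
  grind

theorem signotope_aux {A B C u v w : ℝ} (hu : u < 0) (hv : v < 0) (hw : w < 0)
    (h : v * B = u * A + w * C) : (0 < A → 0 < C → 0 < B) ∧ (¬0 < A → ¬0 < C → ¬0 < B) := by
  constructor
  · intro hA hC
    by_contra hB
    nlinarith [mul_nonneg_of_nonpos_of_nonpos hv.le (not_lt.1 hB), mul_neg_of_neg_of_pos hu hA, mul_neg_of_neg_of_pos hw hC]
  · intro hA hC hB
    nlinarith [mul_nonneg_of_nonpos_of_nonpos hu.le (not_lt.1 hA), mul_neg_of_neg_of_pos hv hB,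
      mul_nonneg_of_nonpos_of_nonpos hw.le (not_lt.1 hC)]

/-- Points sorted clockwise about `x` (within a half-plane) form a signotope under orientation. Each
of the four conditions is a three-term Grassmann–Plücker relation among the orientations of the
four points and `x`, with coefficients of known sign. -/
theorem signotope_orient {α : Type*} [LinearOrder α] (x : Fin 2 → ℝ) (f : α → Fin 2 → ℝ)
    (h : ∀ a b, a < b → orient x (f a) (f b) < 0) :
    Signotope fun a b c => 0 < orient (f a) (f b) (f c) := by
  have main : ∀ a b c d, a < b → b < c → c < d →
      ((0 < orient (f a) (f c) (f d) → 0 < orient (f a) (f b) (f c) →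
          0 < orient (f a) (f b) (f d)) ∧
        (¬0 < orient (f a) (f c) (f d) → ¬0 < orient (f a) (f b) (f c) →
          ¬0 < orient (f a) (f b) (f d))) ∧
      ((0 < orient (f b) (f c) (f d) → 0 < orient (f a) (f b) (f c) →
          0 < orient (f a) (f b) (f d)) ∧
        (¬0 < orient (f b) (f c) (f d) → ¬0 < orient (f a) (f b) (f c) →
          ¬0 < orient (f a) (f b) (f d))) ∧
      ((0 < orient (f b) (f c) (f d) → 0 < orient (f a) (f b) (f c) →
          0 < orient (f a) (f c) (f d)) ∧
        (¬0 < orient (f b) (f c) (f d) → ¬0 < orient (f a) (f b) (f c) →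
          ¬0 < orient (f a) (f c) (f d))) ∧
      ((0 < orient (f b) (f c) (f d) → 0 < orient (f a) (f b) (f d) →
          0 < orient (f a) (f c) (f d)) ∧
        (¬0 < orient (f b) (f c) (f d) → ¬0 < orient (f a) (f b) (f d) →
          ¬0 < orient (f a) (f c) (f d))) := by
    intro a b c d hab hbc hcd
    have hac := hab.trans hbc
    have hbd := hbc.trans hcd
    have had := hab.trans hbd
    exact ⟨signotope_aux (h a b hab) (h a c hac) (h a d had) (by unfold orient; ring),
      signotope_aux (h a b hab) (h b c hbc) (h b d hbd) (by unfold orient; ring),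
      signotope_aux (h a c hac) (h b c hbc) (h c d hcd) (by unfold orient; ring),
      signotope_aux (h a d had) (h b d hbd) (h c d hcd) (by unfold orient; ring)⟩
  constructor
  · intro a b c d hab hbc hcd
    obtain ⟨h1, h2, h3, h4⟩ := main a b c d hab hbc hcd
    exact ⟨fun u v => h1.1 v u, fun u v => h2.1 v u, fun u v => h3.1 v u, fun u v => h4.1 v u⟩
  · intro a b c d hab hbc hcd
    obtain ⟨h1, h2, h3, h4⟩ := main a b c d hab hbc hcd
    exact ⟨fun u v => h1.2 v u, fun u v => h2.2 v u, fun u v => h3.2 v u, fun u v => h4.2 v u⟩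

/-- All but finitely many slopes `ε` work. -/
theorem exists_injOn_functional (S : Finset (Fin 2 → ℝ)) :
    ∃ ε : ℝ, ∀ p ∈ S, ∀ q ∈ S, p 0 + ε * p 1 = q 0 + ε * q 1 → p = q := by
  classical
  obtain ⟨ε, hε⟩ := Infinite.exists_notMem_finset
    ((S ×ˢ S).image fun pq => -(pq.1 0 - pq.2 0) / (pq.1 1 - pq.2 1))
  refine ⟨ε, fun p hp q hq h => ?_⟩
  have h1 : p 1 = q 1 := by
    by_contra hne
    have hne' : p 1 - q 1 ≠ 0 := sub_ne_zero.2 hne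
    refine hε (Finset.mem_image.2 ⟨(p, q), Finset.mem_product.2 ⟨hp, hq⟩, ?_⟩)
    simp only
    rw [div_eq_iff hne']
    linarith
  have h0 : p 0 = q 0 := by rw [h1] at h; linarith
  ext i
  fin_cases i
  · exact h0
  · exact h1

/-- A vertex `x` of the convex hull of `S`, together with the clockwise angular order about `x` on the
other points. These are indexed by a separate linear order `α`, because the subtype of `S` already
carries the coordinatewise order. The angular order is pulled back from `ℝ` along minus the slope of
`q - x` in the coordinates `(φ q, q 1)`, where `φ` is a functional whose minimum over `S` is attained
only at `x`. -/
theorem exists_angular_order {S : Finset (Fin 2 → ℝ)} (hS : S.Nonempty)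
    (hgp : InGeneralPosition 2 S) :
    ∃ x ∈ S, ∃ (α : Type) (_ : Fintype α) (_ : LinearOrder α) (f : α → Fin 2 → ℝ),
      Fintype.card α + 1 = S.card ∧ Function.Injective f ∧ (∀ a, f a ∈ S) ∧ (∀ a, f a ≠ x) ∧
      ∀ a b, a < b → orient x (f a) (f b) < 0 := by
  obtain ⟨ε, hε⟩ := exists_injOn_functional S
  obtain ⟨x, hx, hmin⟩ := S.exists_min_image (fun p => p 0 + ε * p 1) hS
  have hpos : ∀ q : {q // q ∈ S.erase x}, 0 < (q.1 0 - x 0) + ε * (q.1 1 - x 1) := by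
    intro q
    obtain ⟨hne, hq⟩ := Finset.mem_erase.1 q.2
    have h1 := hmin q.1 hq
    have h2 : x 0 + ε * x 1 ≠ q.1 0 + ε * q.1 1 := fun h => hne (hε _ hx _ hq h).symm
    have := lt_of_le_of_ne h1 h2
    linarith
  let key : {q // q ∈ S.erase x} → ℝ := fun q =>
    -(q.1 1 - x 1) / ((q.1 0 - x 0) + ε * (q.1 1 - x 1))
  have hkey : ∀ a b : {q // q ∈ S.erase x}, orient x a b = ((a.1 0 - x 0) + ε * (a.1 1 - x 1)) *
      ((b.1 0 - x 0) + ε * (b.1 1 - x 1)) * (key a - key b) := by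
    intro a b
    have ha := (hpos a).ne'
    have hb := (hpos b).ne'
    have ea : key a * ((a.1 0 - x 0) + ε * (a.1 1 - x 1)) = -(a.1 1 - x 1) :=
      div_mul_cancel₀ _ ha
    have eb : key b * ((b.1 0 - x 0) + ε * (b.1 1 - x 1)) = -(b.1 1 - x 1) :=
      div_mul_cancel₀ _ hb
    unfold orient
    linear_combination -((b.1 0 - x 0) + ε * (b.1 1 - x 1)) * ea
      + ((a.1 0 - x 0) + ε * (a.1 1 - x 1)) * eb
  have hinj : Function.Injective key := by
    intro a b hab
    by_contra hne
    obtain ⟨hax, haS⟩ := Finset.mem_erase.1 a.2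
    obtain ⟨hbx, hbS⟩ := Finset.mem_erase.1 b.2
    refine orient_ne_zero hgp hx haS hbS hax.symm hbx.symm (fun h => hne (Subtype.ext h)) ?_
    rw [hkey, hab, sub_self, mul_zero]
  refine ⟨x, hx, {q // q ∈ S.erase x}, inferInstance, LinearOrder.lift' key hinj, Subtype.val, ?_,
    Subtype.val_injective, fun q => Finset.mem_of_mem_erase q.2,
    fun q => Finset.ne_of_mem_erase q.2, fun a b hab => ?_⟩
  · rw [Fintype.card_coe, Finset.card_erase_add_one hx]
  have hab' : key a < key b := hab
  rw [hkey]
  exact mul_neg_of_pos_of_neg (mul_pos (hpos a) (hpos b)) (sub_neg.2 hab')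

end Plane
end CupCap

/-! ### The bound -/

open CupCap in
/-- Every set of `C(13,7) + 1 = 1717` points in the plane in general position
contains a 9-gon: `g⁽²⁾(9) ≤ 1717`. -/
theorem g2_9_le_1717 (S : Finset (Fin 2 → ℝ)) (hcard : S.card = Nat.choose 13 7 + 1)
    (hgp : InGeneralPosition 2 S) :
    ∃ X ⊆ S, X.card = 9 ∧ InConvexPosition 2 X := by
  by_contra! hno
  have hcard' : S.card = 1717 := by rw [hcard]; rfl
  obtain ⟨x, hx, α, _, _, f, hα, hfinj, hfS, hfx, hord⟩ :=
    exists_angular_order (Finset.card_pos.1 (by omega)) hgp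
  have hsig := signotope_orient x f hord
  have hneg : ∀ a b c, a < b → b < c → ¬0 < orient (f a) (f b) (f c) →
      orient (f a) (f b) (f c) < 0 := fun a b c hab hbc h =>
    lt_of_le_of_ne (not_lt.1 h) (orient_ne_zero hgp (hfS a) (hfS b) (hfS c)
      (hfinj.ne hab.ne) (hfinj.ne (hab.trans hbc).ne) (hfinj.ne hbc.ne))
  -- It remains to exhibit a polygon in each of three cases: a 9-cup, an 8-cap together with `x`,
  -- and an 8-cup together with a point above its chord.
  have hpoly : ∀ L : List (Fin 2 → ℝ), (∀ p ∈ L, p ∈ S) → L.Nodup → L.length = 9 →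
      ¬L.Triplewise fun a b c => 0 < orient a b c := fun L hLS hnd hlen h =>
    hno L.toFinset (fun p hp => hLS p (List.mem_toFinset.1 hp))
      (by rw [List.toFinset_card_of_nodup hnd, hlen])
      (convexPosition_of_triplewise (by omega) hnd h)
  have hle := card_le hsig ?_ ?_ ?_
  · omega
  · intro L hL hlen
    refine hpoly (L.map f) ?_ ?_ (by simpa using hlen) ?_
    · simp only [List.mem_map]; rintro _ ⟨q, -, rfl⟩; exact hfS q
    · exact (hL.pairwise.imp ne_of_lt).map f fun _ _ h => hfinj.ne h
    · exact List.triplewise_map.2 (hL.triplewise hsig)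
  · intro L hL hlen
    have hnd : (x :: L.map f).Nodup := by
      refine List.nodup_cons.2 ⟨?_, (hL.pairwise.imp ne_of_lt).map f fun _ _ h => hfinj.ne h⟩
      simp only [List.mem_map, not_exists, not_and]
      exact fun q _ => hfx q
    refine hpoly (x :: L.map f).reverse ?_ (List.nodup_reverse.2 hnd) (by simpa using hlen) ?_
    · simp only [List.mem_reverse, List.mem_cons, List.mem_map]
      rintro _ (rfl | ⟨q, -, rfl⟩)
      · exact hx
      · exact hfS q
    · rw [List.triplewise_reverse, List.triplewise_cons]
      constructor
      · rw [List.pairwise_map]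
        refine hL.pairwise.imp fun {a b} hab => ?_
        rw [orient_swap]
        exact neg_pos.2 (hord a b hab)
      · rw [List.triplewise_map]
        have ht := hL.triplewise hsig.compl
        have hp := hL.pairwise
        rw [List.triplewise_iff_getElem] at ht ⊢
        rw [List.pairwise_iff_getElem] at hp
        intro i j k hij hjk hk
        rw [orient_swap]
        exact neg_pos.2 (hneg _ _ _ (hp i j (by omega) (by omega) hij)
          (hp j k (by omega) (by omega) hjk) (ht i j k hij hjk hk))
  · intro a L z t hL hlen hat htz
    by_contra hT
    have hpairs := lens_pairs hsig hL hat htz hT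
    have htL : ∀ q ∈ a :: (L ++ [z]), q ≠ t := by
      have := hL.triplewise hsig
      rw [List.triplewise_cons, List.pairwise_append] at this
      rintro q hq rfl
      simp only [List.mem_cons, List.mem_append, List.not_mem_nil, or_false] at hq
      rcases hq with rfl | hq | rfl
      · exact lt_irrefl _ hat
      · exact hT (this.1.2.2 q hq z (by simp))
      · exact lt_irrefl _ htz
    refine hpoly ((a :: (L ++ [z]) ++ [t]).map f) ?_ ?_ (by simpa using hlen) ?_
    · simp only [List.mem_map]; rintro _ ⟨q, -, rfl⟩; exact hfS q
    · refine List.Nodup.map hfinj ?_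
      refine List.nodup_append.2 ⟨hL.pairwise.imp ne_of_lt, by simp, ?_⟩
      intro q hq r hr
      rw [List.mem_singleton.1 hr]
      exact htL q hq
    · rw [List.triplewise_map, List.triplewise_append]
      refine ⟨hL.triplewise hsig, by simp, by simp, ?_⟩
      intro r hr
      rw [List.mem_singleton.1 hr]
      refine hpairs.imp fun {u v} huv => ?_
      rcases huv with ⟨-, h⟩ | ⟨hut, htv, h⟩ | ⟨-, h⟩
      · exact h
      · have := hneg _ _ _ hut htv h
        unfold orient at this ⊢
        linarith
      · rwa [orient_rot]
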